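/- arXiv:0902.0433 — 3 statements merged into one kernel-verified Lean document; each statement's English description precedes it below -/
import Mathlib

section
/- For every integer n ≥ 2 and every k ≥ 0 such that q_k ≤ n ≤ q_{k+1} − 1, writing n = q_k + j with 0 ≤ j ≤ q_{k+1} − q_k − 1, one has f(n) = q_{k+1} + q_k − 1 + j. -/
open scoped Classical

noncomputable section

/-- The Gauss map. -/
def gaussMap (x : ℝ) : ℝ := Int.fract x⁻¹

/-- `pq α k` is the partial quotient `a_{k+1}` of the continued fraction of `α`. -/
def pq (α : ℝ) (k : ℕ) : ℕ := ⌊(gaussMap^[k] α)⁻¹⌋₊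

/-- `qd α (n+1)` is the convergent denominator `q_n`; `qd α 0 = q_{-1} = 0`, `qd α 1 = q₀ = 1`. -/
def qd (α : ℝ) : ℕ → ℕ
  | 0 => 0
  | 1 => 1
  | (n+2) => pq α n * qd α (n+1) + qd α n

/-- The circle map sequence of rotation number `α` (value `true` means letter `1`). -/
def v0 (α : ℝ) (n : ℤ) : Bool := decide (1 - α ≤ Int.fract ((n : ℝ) * α))

/-- The word `(v₀(m+1), …, v₀(m+n))`. -/
def word (α : ℝ) (m n : ℕ) : List Bool :=
  (List.range n).map (fun i => v0 α ((m : ℤ) + 1 + i))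

/-- `w` is a factor (admissible word) of `v₀`. -/
def IsFactor (α : ℝ) (w : List Bool) : Prop := ∃ m : ℕ, w = word α m w.length

/-- `w` occurs as a subword of the prefix `(v₀(1), …, v₀(N))`. -/
def OccursIn (α : ℝ) (w : List Bool) (N : ℕ) : Prop :=
  ∃ m : ℕ, m + w.length ≤ N ∧ w = word α m w.length

/-- `exhaust α n` is `f(n)`: the least `N` such that every factor of length `n`
occurs in `(v₀(1), …, v₀(N))`. -/
def exhaust (α : ℝ) (n : ℕ) : ℕ :=
  sInf {N | ∀ w : List Bool, w.length = n → IsFactor α w → OccursIn α w N}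

/-- number of occurrences of `w` in the prefix `(v₀(1), …, v₀(N))`. -/
def occCount (α : ℝ) (w : List Bool) (N : ℕ) : ℕ :=
  ((Finset.range N).filter (fun m => m + w.length ≤ N ∧ word α m w.length = w)).card

/-- the word `(v(m), v(m+1), …, v(m+n-1))` of a two-sided sequence. -/
def wordAt (v : ℤ → Bool) (m : ℤ) (n : ℕ) : List Bool :=
  (List.range n).map (fun i => v (m + i))

/-- the hull `Ω`: closure of the set of translates of `v₀`. -/
def hull (α : ℝ) : Set (ℤ → Bool) :=
  closure {u | ∃ m : ℤ, u = fun n => v0 α (n - m)}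

theorem qd_succ_pos {α : ℝ} (h : ∀ k, 0 < pq α k) (k : ℕ) : 0 < qd α (k + 1) := by
  induction k with
  | zero => simp [qd]
  | succ k ih => simp only [qd]; have := Nat.mul_pos (h k) ih; omega

theorem irrational_gaussMap_iterate {α : ℝ} (hirr : Irrational α) (h0 : 0 < α) (h1 : α < 1)
    (k : ℕ) : Irrational (gaussMap^[k] α) ∧ 0 < gaussMap^[k] α ∧ gaussMap^[k] α < 1 := by
  induction k with
  | zero => exact ⟨hirr, h0, h1⟩
  | succ k ih =>
    rw [Function.iterate_succ_apply']
    have hi : Irrational (gaussMap (gaussMap^[k] α)) := by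
      have := (irrational_inv_iff.2 ih.1).sub_intCast ⌊(gaussMap^[k] α)⁻¹⌋
      rwa [Int.self_sub_floor] at this
    refine ⟨hi, lt_of_le_of_ne (Int.fract_nonneg _) (hi.ne_zero).symm, Int.fract_lt_one _⟩

theorem pq_pos {α : ℝ} (hirr : Irrational α) (h0 : 0 < α) (h1 : α < 1) (k : ℕ) :
    0 < pq α k := by
  obtain ⟨-, h, h'⟩ := irrational_gaussMap_iterate hirr h0 h1 k
  exact Nat.floor_pos.2 ((one_lt_inv₀ h).2 h').le

/-- Consecutive convergents have determinant `±1`, and their errors have ratio minus a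
Gauss iterate. -/
theorem exists_convergents {α : ℝ} (hirr : Irrational α) (h0 : 0 < α) (h1 : α < 1) (k : ℕ) :
    ∃ p P : ℤ, ((qd α k : ℤ) * P - qd α (k + 1) * p) ^ 2 = 1 ∧
      (qd α (k + 1) * α - P : ℝ) = -gaussMap^[k] α * (qd α k * α - p) := by
  induction k with
  | zero => exact ⟨1, 0, by simp [qd], by simp [qd]⟩
  | succ k ih =>
    obtain ⟨p, P, hdet, hrat⟩ := ih
    obtain ⟨-, hx, hx1⟩ := irrational_gaussMap_iterate hirr h0 h1 k
    refine ⟨P, pq α k * P + p, ?_, ?_⟩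
    · rw [← hdet]; simp only [qd]; push_cast; ring
    · have hfl : ((pq α k : ℕ) : ℝ) = (⌊(gaussMap^[k] α)⁻¹⌋ : ℝ) := by
        rw [pq]; exact natCast_floor_eq_intCast_floor (inv_pos.2 hx).le
      have hg : gaussMap^[k + 1] α = (gaussMap^[k] α)⁻¹ - pq α k := by
        rw [Function.iterate_succ_apply', hfl]; rfl
      rw [hg]
      have : (qd α k * α - p : ℝ) = -(gaussMap^[k] α)⁻¹ * (qd α (k + 1) * α - P) := by
        rw [hrat]; field_simp
      simp only [qd]
      push_cast
      linear_combination this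

/-- Law of best approximation for two consecutive approximations with errors of opposite sign. -/
theorem abs_error_le_of_lt {α x : ℝ} {q Q : ℕ} {p P : ℤ} (hx : 0 < x)
    (hdet : ((q : ℤ) * P - Q * p) ^ 2 = 1) (hrat : (Q * α - P : ℝ) = -x * (q * α - p))
    {m z : ℤ} (hm : 0 < m) (hmQ : m < Q) : |(q * α - p : ℝ)| ≤ |m * α - z| := by
  set d : ℤ := (q : ℤ) * P - Q * p with hd
  obtain ⟨a, b, ham, haz⟩ : ∃ a b : ℤ, m = a * q + b * Q ∧ z = a * p + b * P := by
    refine ⟨d * (m * P - z * Q), d * (z * q - m * p), ?_, ?_⟩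
    · linear_combination (-m) * hdet + m * d * hd
    · linear_combination (-z) * hdet + z * d * hd
  have hq : (0 : ℤ) ≤ q := Int.natCast_nonneg q
  have hQ : (0 : ℤ) < Q := by omega
  have ha : a ≠ 0 := by
    rintro rfl
    have : 0 < b := by by_contra! h; nlinarith
    nlinarith
  have hab : a * b ≤ 0 := by
    by_contra! h
    rcases pos_and_pos_or_neg_and_neg_of_mul_pos h with ⟨h, h'⟩ | ⟨h, h'⟩ <;> nlinarith
  have hab' : (a * b : ℝ) ≤ 0 := by exact_mod_cast hab
  have key : (m * α - z : ℝ) = (a - b * x) * (q * α - p) := by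
    rw [ham, haz]; push_cast; linear_combination (b : ℝ) * hrat
  rw [key, abs_mul]
  refine le_mul_of_one_le_left (abs_nonneg _) ?_
  rcases lt_or_gt_of_ne ha with h | h
  · have hb : 0 ≤ b := by by_contra! h'; nlinarith
    have h2 : (a : ℝ) ≤ -1 := by exact_mod_cast (by omega : a ≤ -1)
    have h3 : (0 : ℝ) ≤ b := by exact_mod_cast hb
    rw [le_abs]; right; nlinarith
  · have hb : b ≤ 0 := by by_contra! h'; nlinarith
    have h2 : (1 : ℝ) ≤ a := by exact_mod_cast (by omega : 1 ≤ a)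
    have h3 : (b : ℝ) ≤ 0 := by exact_mod_cast hb
    rw [le_abs]; left; nlinarith

theorem floor_add_one_mul {α : ℝ} (h0 : 0 < α) (h1 : α < 1) (i : ℤ) :
    ⌊((i : ℝ) + 1) * α⌋ = ⌊(i : ℝ) * α⌋ + if v0 α i then 1 else 0 := by
  have hf := Int.floor_add_fract ((i : ℝ) * α)
  have := Int.fract_nonneg ((i : ℝ) * α)
  have := Int.fract_lt_one ((i : ℝ) * α)
  rw [Int.floor_eq_iff]
  by_cases h : 1 - α ≤ Int.fract ((i : ℝ) * α)
  · simp only [v0, h, decide_true, if_true]; push_cast; constructor <;> linarith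
  · simp only [v0, h, decide_false, Bool.false_eq_true, if_false]; push_cast
    constructor <;> linarith

theorem word_eq_word_iff (α : ℝ) (m m' n : ℕ) :
    word α m n = word α m' n ↔ ∀ i < n, v0 α ((m : ℤ) + 1 + i) = v0 α ((m' : ℤ) + 1 + i) := by
  simp only [word, List.map_inj_left]
  constructor
  · intro h i hi
    exact h i (by simpa using hi)
  · intro h a ha
    obtain ⟨i, hi, rfl⟩ : ∃ i < n, a = (i : ℤ) := by simpa using ha
    exact h i hi

/-- Two words agree iff the floor sequences underlying them differ by a constant. -/
theorem word_eq_word_iff_floor {α : ℝ} (h0 : 0 < α) (h1 : α < 1) (m m' n : ℕ) :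
    word α m n = word α m' n ↔ ∃ D : ℤ, ∀ t : ℕ, t ≤ n →
      ⌊((m : ℝ) + 1 + t) * α⌋ = ⌊((m' : ℝ) + 1 + t) * α⌋ + D := by
  rw [word_eq_word_iff]
  have hstep (m t : ℕ) : ⌊((m : ℝ) + 1 + (t + 1 : ℕ)) * α⌋ =
      ⌊((m : ℝ) + 1 + t) * α⌋ + if v0 α ((m : ℤ) + 1 + t) then 1 else 0 := by
    have := floor_add_one_mul h0 h1 ((m : ℤ) + 1 + t)
    push_cast at this ⊢
    rw [← this, add_assoc ((m : ℝ) + 1)]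
  constructor
  · intro h
    refine ⟨⌊((m : ℝ) + 1 + (0 : ℕ)) * α⌋ - ⌊((m' : ℝ) + 1 + (0 : ℕ)) * α⌋, fun t => ?_⟩
    induction t with
    | zero => intro _; ring
    | succ t ih =>
      intro ht
      rw [hstep, hstep, ih (by omega), h t (by omega)]
      ring
  · rintro ⟨D, hD⟩ i hi
    have h := hD (i + 1) hi
    rw [hstep, hstep, hD i hi.le] at h
    rcases Bool.eq_false_or_eq_true (v0 α ((m : ℤ) + 1 + i)) with h2 | h2 <;>
    rcases Bool.eq_false_or_eq_true (v0 α ((m' : ℤ) + 1 + i)) with h3 | h3 <;>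
    simp_all

theorem floor_add_of_abs_lt {y ε η : ℝ} (hε : |ε| < η) (hy : ∀ z : ℤ, η ≤ |y - z|) :
    ⌊y + ε⌋ = ⌊y⌋ := by
  have h1 := hy ⌊y⌋
  have h2 := hy (⌊y⌋ + 1)
  have h3 := Int.floor_le y
  have h4 := Int.lt_floor_add_one y
  push_cast at h2
  rw [abs_of_nonneg (by linarith)] at h1
  rw [abs_of_neg (by linarith)] at h2
  rw [abs_lt] at hε
  rw [Int.floor_eq_iff]
  constructor <;> linarith

section Approximation

variable {α : ℝ} {q Q n : ℕ} {p P : ℤ}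

/-- Every factor of length `n < Q` starts at one of the first `Q` positions. -/
theorem exists_word_eq (h0 : 0 < α) (h1 : α < 1) (hE0 : (Q * α - P : ℝ) ≠ 0)
    (hEe : |(Q * α - P : ℝ)| < |(q * α - p : ℝ)|)
    (hbest : ∀ m z : ℤ, 0 < m → m < Q → |(q * α - p : ℝ)| ≤ |m * α - z|)
    (hQ : 1 < Q) (hnQ : n < Q) (m : ℕ) : ∃ m' : ℕ, m' < Q ∧ word α m n = word α m' n := by
  have hE1 : |(Q * α - P : ℝ)| < 1 := by
    have := hbest 1 0 one_pos (by exact_mod_cast hQ)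
    simp only [Int.cast_one, one_mul, Int.cast_zero, sub_zero, abs_of_pos h0] at this
    linarith
  rw [abs_lt] at hE1
  have hfar (t t₀ : ℕ) (ht : t ≤ n) (ht₀ : t₀ ≤ n) (hne : t ≠ t₀) (z : ℤ) :
      |(q * α - p : ℝ)| ≤ |((t : ℝ) - t₀) * α - z| := by
    rcases lt_or_gt_of_ne hne with h | h
    · have := hbest (t₀ - t) (-z) (by omega) (by omega)
      rw [← abs_neg ((((t : ℝ) - t₀) * α - z))]
      convert this using 2; push_cast; ring
    · have := hbest (t - t₀) z (by omega) (by omega)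
      exact_mod_cast this
  have hstart (t₀ t : ℕ) (ht₀ : t₀ ≤ n) : (((Q - t₀ - 1 : ℕ) : ℝ) + 1 + t) * α =
      ((t : ℝ) - t₀) * α + (Q * α - P) + P := by
    have : (((Q - t₀ - 1 : ℕ) : ℝ)) = Q - t₀ - 1 := by
      rw [Nat.cast_sub (by omega), Nat.cast_sub (by omega)]; simp
    rw [this]; ring
  have hfract_pos (t t₀ : ℕ) (ht : t ≤ n) (ht₀ : t₀ ≤ n) (hne : t ≠ t₀) :
      0 < Int.fract (((t : ℝ) - t₀) * α) := by
    have := hfar t t₀ ht ht₀ hne ⌊((t : ℝ) - t₀) * α⌋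
    rw [Int.self_sub_floor, abs_of_nonneg (Int.fract_nonneg (((t : ℝ) - t₀) * α))] at this
    exact (abs_nonneg _).trans_lt hEe |>.trans_le this
  set g : ℕ → ℝ := fun t => Int.fract (((m : ℝ) + 1 + t) * α) with hg
  have hne : (Finset.range (n + 1)).Nonempty := ⟨0, by simp⟩
  rcases lt_or_gt_of_ne hE0 with hE | hE
  · obtain ⟨t₀, ht₀, hmax⟩ := Finset.exists_max_image _ g hne
    rw [Finset.mem_range, Nat.lt_succ_iff] at ht₀
    refine ⟨Q - t₀ - 1, by omega, (word_eq_word_iff_floor h0 h1 _ _ _).2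
      ⟨⌊((m : ℝ) + 1 + t₀) * α⌋ + 1 - P, fun t ht => ?_⟩⟩
    rw [hstart t₀ t ht₀, Int.floor_add_intCast]
    have hF := Int.floor_add_fract (((m : ℝ) + 1 + t₀) * α)
    have hF1 := Int.fract_lt_one (((m : ℝ) + 1 + t₀) * α)
    by_cases hEq : t = t₀
    · subst hEq
      have : ⌊((t : ℝ) - t) * α + (Q * α - P)⌋ = -1 := by
        rw [Int.floor_eq_iff]
        constructor <;> push_cast <;> linarith
      rw [this]; ring
    · rw [floor_add_of_abs_lt hEe (hfar t t₀ ht ht₀ hEq)]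
      have hpos := hfract_pos t t₀ ht ht₀ hEq
      have hy := Int.floor_add_fract (((t : ℝ) - t₀) * α)
      have hy1 := Int.fract_lt_one (((t : ℝ) - t₀) * α)
      have hle := hmax t (by simp; omega)
      have hF0 := Int.fract_nonneg (((m : ℝ) + 1 + t₀) * α)
      have hsum : ((m : ℝ) + 1 + t) * α = ((m : ℝ) + 1 + t₀) * α + ((t : ℝ) - t₀) * α := by ring
      by_cases hc : 1 ≤ Int.fract (((m : ℝ) + 1 + t₀) * α) + Int.fract (((t : ℝ) - t₀) * α)
      · rw [Int.floor_eq_iff]; push_cast; constructor <;> linarith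
      · have : g t = g t₀ + Int.fract (((t : ℝ) - t₀) * α) := by
          rw [hg]; simp only
          rw [Int.fract_eq_iff]
          refine ⟨by linarith, by linarith,
            ⌊((m : ℝ) + 1 + t₀) * α⌋ + ⌊((t : ℝ) - t₀) * α⌋, ?_⟩
          push_cast; linarith
        linarith
  · obtain ⟨t₀, ht₀, hmin⟩ := Finset.exists_min_image _ g hne
    rw [Finset.mem_range, Nat.lt_succ_iff] at ht₀
    refine ⟨Q - t₀ - 1, by omega, (word_eq_word_iff_floor h0 h1 _ _ _).2
      ⟨⌊((m : ℝ) + 1 + t₀) * α⌋ - P, fun t ht => ?_⟩⟩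
    rw [hstart t₀ t ht₀, Int.floor_add_intCast]
    have hF := Int.floor_add_fract (((m : ℝ) + 1 + t₀) * α)
    have hF1 := Int.fract_lt_one (((m : ℝ) + 1 + t₀) * α)
    have hF0 := Int.fract_nonneg (((m : ℝ) + 1 + t₀) * α)
    by_cases hEq : t = t₀
    · subst hEq
      have : ⌊((t : ℝ) - t) * α + (Q * α - P)⌋ = 0 := by
        rw [Int.floor_eq_iff]
        constructor <;> push_cast <;> linarith
      rw [this]; ring
    · rw [floor_add_of_abs_lt hEe (hfar t t₀ ht ht₀ hEq)]
      have hy := Int.floor_add_fract (((t : ℝ) - t₀) * α)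
      have hy1 := Int.fract_lt_one (((t : ℝ) - t₀) * α)
      have hy0 := Int.fract_nonneg (((t : ℝ) - t₀) * α)
      have hle := hmin t (by simp; omega)
      have hsum : ((m : ℝ) + 1 + t) * α = ((m : ℝ) + 1 + t₀) * α + ((t : ℝ) - t₀) * α := by ring
      by_cases hc : Int.fract (((m : ℝ) + 1 + t₀) * α) + Int.fract (((t : ℝ) - t₀) * α) < 1
      · rw [Int.floor_eq_iff]; push_cast; constructor <;> linarith
      · have : g t = g t₀ + Int.fract (((t : ℝ) - t₀) * α) - 1 := by
          rw [hg]; simp only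
          rw [Int.fract_eq_iff]
          refine ⟨by linarith, by linarith,
            ⌊((m : ℝ) + 1 + t₀) * α⌋ + ⌊((t : ℝ) - t₀) * α⌋ + 1, ?_⟩
          push_cast; linarith
        linarith

/-- The factor starting at position `Q - 1` does not start earlier, once `q ≤ n`. -/
theorem word_ne_word_of_lt (hirr : Irrational α) (h0 : 0 < α) (h1 : α < 1) (hq : 0 < q)
    (hopp : (Q * α - P : ℝ) * (q * α - p) < 0)
    (hEe : |(Q * α - P : ℝ)| < |(q * α - p : ℝ)|)
    (hbest : ∀ m z : ℤ, 0 < m → m < Q → |(q * α - p : ℝ)| ≤ |m * α - z|)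
    (hQ : 1 < Q) (hqn : q ≤ n) {m : ℕ} (hm : m + 1 < Q) :
    word α (Q - 1) n ≠ word α m n := by
  intro heq
  have he1 : |(q * α - p : ℝ)| < 1 := by
    have := hbest 1 0 one_pos (by exact_mod_cast hQ)
    simp only [Int.cast_one, one_mul, Int.cast_zero, sub_zero, abs_of_pos h0] at this
    linarith
  obtain ⟨D, hD⟩ := (word_eq_word_iff_floor h0 h1 _ _ _).1 heq
  have hQcast : ((Q - 1 : ℕ) : ℝ) + 1 = Q := by
    rw [Nat.cast_sub hQ.le]; simp
  have hD0 := hD 0 (Nat.zero_le n)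
  have hDq := hD q hqn
  simp only [hQcast, Nat.cast_zero, add_zero] at hD0 hDq
  have hf0 := Int.floor_le (((m : ℝ) + 1) * α)
  have hf1 := Int.lt_floor_add_one (((m : ℝ) + 1) * α)
  have hg0 := Int.floor_le (((m : ℝ) + 1 + q) * α)
  have hg1 := Int.lt_floor_add_one (((m : ℝ) + 1 + q) * α)
  have hfar := hbest (m + 1) (P - D) (by omega) (by omega)
  push_cast at hfar
  rcases lt_or_gt_of_ne (left_ne_zero_of_mul hopp.ne) with hE | hE
  · have he : (0 : ℝ) < q * α - p := by
      by_contra! h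
      exact absurd hopp (not_lt.2 (mul_nonneg_of_nonpos_of_nonpos hE.le h))
    rw [abs_of_neg hE, abs_of_pos he] at hEe
    rw [abs_of_pos he] at he1 hfar
    have h2 : ⌊(Q : ℝ) * α⌋ = P - 1 := by
      rw [Int.floor_eq_iff]; push_cast; constructor <;> linarith
    have h3 : ⌊((Q : ℝ) + q) * α⌋ = P + p := by
      rw [Int.floor_eq_iff]; push_cast; constructor <;> linarith
    have h4 : (⌊((m : ℝ) + 1) * α⌋ : ℝ) = P - 1 - D := by
      exact_mod_cast (by omega : ⌊((m : ℝ) + 1) * α⌋ = P - 1 - D)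
    have h5 : (⌊((m : ℝ) + 1 + q) * α⌋ : ℝ) = P + p - D := by
      exact_mod_cast (by omega : ⌊((m : ℝ) + 1 + q) * α⌋ = P + p - D)
    rw [h4] at hf0 hf1
    rw [h5] at hg0 hg1
    rw [abs_of_neg (by linarith)] at hfar
    have hirr' := hirr.natCast_mul (by omega : m + 1 + q ≠ 0)
    refine hirr'.ne_int (P + p - D) ?_
    push_cast
    linarith
  · have he : (q * α - p : ℝ) < 0 := by
      by_contra! h
      exact absurd hopp (not_lt.2 (mul_nonneg hE.le h))
    rw [abs_of_pos hE, abs_of_neg he] at hEe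
    rw [abs_of_neg he] at he1 hfar
    have h2 : ⌊(Q : ℝ) * α⌋ = P := by
      rw [Int.floor_eq_iff]; constructor <;> linarith
    have h3 : ⌊((Q : ℝ) + q) * α⌋ = P + p - 1 := by
      rw [Int.floor_eq_iff]; push_cast; constructor <;> linarith
    have h4 : (⌊((m : ℝ) + 1) * α⌋ : ℝ) = P - D := by
      exact_mod_cast (by omega : ⌊((m : ℝ) + 1) * α⌋ = P - D)
    have h5 : (⌊((m : ℝ) + 1 + q) * α⌋ : ℝ) = P + p - 1 - D := by
      exact_mod_cast (by omega : ⌊((m : ℝ) + 1 + q) * α⌋ = P + p - 1 - D)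
    rw [h4] at hf0 hf1
    rw [h5] at hg0 hg1
    rw [abs_of_nonneg (by linarith)] at hfar
    linarith

end Approximation

/-- For `n ≥ 2` and `k ≥ 0` with `q_k ≤ n ≤ q_{k+1} - 1`, writing
`n = q_k + j`, one has `f(n) = q_{k+1} + q_k - 1 + j`.
(Here `qd α (k+1) = q_k`.) -/
theorem exhaust_eq (α : ℝ) (hirr : Irrational α) (h0 : 0 < α) (h1 : α < 1)
    (n k : ℕ) (hn : 2 ≤ n) (hlow : qd α (k+1) ≤ n) (hhigh : n ≤ qd α (k+2) - 1) :
    exhaust α n = qd α (k+2) + qd α (k+1) - 1 + (n - qd α (k+1)) := by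
  obtain ⟨p, P, hdet, hrat⟩ := exists_convergents hirr h0 h1 (k + 1)
  obtain ⟨-, hx, hx1⟩ := irrational_gaussMap_iterate hirr h0 h1 (k + 1)
  have hq : 0 < qd α (k + 1) := qd_succ_pos (pq_pos hirr h0 h1) k
  rw [show k + 1 + 1 = k + 2 from rfl] at hdet hrat
  set q := qd α (k + 1)
  set Q := qd α (k + 2)
  have hnQ : n < Q := by omega
  have he : (q * α - p : ℝ) ≠ 0 :=
    ((hirr.natCast_mul hq.ne').sub_intCast p).ne_zero
  have hE0 : (Q * α - P : ℝ) ≠ 0 := by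
    rw [hrat]; exact mul_ne_zero (neg_ne_zero.2 hx.ne') he
  have hEe : |(Q * α - P : ℝ)| < |(q * α - p : ℝ)| := by
    rw [hrat, abs_mul, abs_neg, abs_of_pos hx]
    exact mul_lt_of_lt_one_left (abs_pos.2 he) hx1
  have hopp : (Q * α - P : ℝ) * (q * α - p) < 0 := by
    rw [hrat, mul_assoc]
    exact mul_neg_of_neg_of_pos (neg_neg_of_pos hx) (mul_self_pos.2 he)
  have hbest (m z : ℤ) (hm : 0 < m) (hmQ : m < Q) : |(q * α - p : ℝ)| ≤ |m * α - z| :=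
    abs_error_le_of_lt hx hdet hrat hm hmQ
  have hlen (m : ℕ) : (word α m n).length = n := by simp [word]
  rw [show Q + q - 1 + (n - q) = Q - 1 + n by omega]
  refine IsLeast.csInf_eq ⟨?_, ?_⟩
  · rintro w hw ⟨m, hm⟩
    obtain ⟨m', hm', hmm⟩ := exists_word_eq h0 h1 hE0 hEe hbest (by omega) hnQ m
    exact ⟨m', by omega, by rw [hw] at hm ⊢; exact hm.trans hmm⟩
  · intro N hN
    obtain ⟨m, hmN, hm⟩ := hN (word α (Q - 1) n) (hlen _) ⟨Q - 1, by rw [hlen]⟩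
    rw [hlen] at hmN hm
    by_contra! hlt
    exact word_ne_word_of_lt hirr h0 h1 hq hopp hEe hbest (by omega) hlow (by omega) hm

end
end

section
/- For every integer n ≥ 2, f(n) = max(f(n−1) + 1, g(n)); equivalently, f(n) is the least integer N satisfying both N ≥ f(n−1) + 1 and N ≥ g(n). -/
open scoped Classical

noncomputable section

theorem word_length (α : ℝ) (m n : ℕ) : (word α m n).length = n := by
  simp [word]

theorem word_succ (α : ℝ) (m n : ℕ) :
    word α m (n + 1) = word α m n ++ [v0 α ((m : ℤ) + 1 + n)] := by
  simp [word, List.range_succ]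

theorem getElem_word (α : ℝ) (m n i : ℕ) (hi : i < (word α m n).length) :
    (word α m n)[i] = v0 α ((m : ℤ) + 1 + i) := by
  simp [word, ← List.map_eq_flatMap]

theorem isFactor_iff {α : ℝ} {w : List Bool} {n : ℕ} (hw : w.length = n) :
    IsFactor α w ↔ ∃ m, w = word α m n := by
  subst hw; rfl

theorem occursIn_iff {α : ℝ} {w : List Bool} {n N : ℕ} (hw : w.length = n) :
    OccursIn α w N ↔ ∃ m, m + n ≤ N ∧ w = word α m n := by
  subst hw; rfl

theorem OccursIn.mono {α : ℝ} {w : List Bool} {N M : ℕ} (h : OccursIn α w N) (hNM : N ≤ M) :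
    OccursIn α w M := by
  obtain ⟨m, hm, hw⟩ := h
  exact ⟨m, hm.trans hNM, hw⟩

theorem IsFactor.exists_occursIn {α : ℝ} {w : List Bool} (h : IsFactor α w) :
    ∃ N, OccursIn α w N := by
  obtain ⟨m, hw⟩ := h
  exact ⟨_, m, le_rfl, hw⟩

theorem append_singleton_eq_word {α : ℝ} {u : List Bool} {b : Bool} {m k : ℕ}
    (h : u ++ [b] = word α m (k + 1)) : u = word α m k ∧ v0 α ((m : ℤ) + 1 + k) = b := by
  rw [word_succ] at h
  obtain ⟨hu, hb⟩ := List.append_inj' h rfl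
  exact ⟨hu, by simpa using hb.symm⟩

theorem exists_word_of_isFactor_append {α : ℝ} {u : List Bool} {b : Bool} {k : ℕ}
    (hu : u.length = k) (h : IsFactor α (u ++ [b])) :
    ∃ m : ℕ, u = word α m k ∧ v0 α ((m : ℤ) + 1 + k) = b := by
  obtain ⟨m, hm⟩ := (isFactor_iff (n := k + 1) (by simp [hu])).1 h
  exact ⟨m, append_singleton_eq_word hm⟩

/-- Every factor of length `n` occurs in the prefix of length `exhaust α n`. -/
theorem exhaust_spec (α : ℝ) (n : ℕ) {w : List Bool} (hw : w.length = n)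
    (hf : IsFactor α w) : OccursIn α w (exhaust α n) := by
  have hne : {N | ∀ w : List Bool, w.length = n → IsFactor α w → OccursIn α w N}.Nonempty := by
    choose! F hF using fun (w : List Bool) (h : IsFactor α w) => h.exists_occursIn
    obtain ⟨B, hB⟩ := ((List.finite_length_eq Bool n).image F).bddAbove
    exact ⟨B, fun w hw hf => (hF w hf).mono (hB ⟨w, hw, rfl⟩)⟩
  exact Nat.sInf_mem hne w hw hf

theorem exhaust_le {α : ℝ} {n N : ℕ}
    (h : ∀ w : List Bool, w.length = n → IsFactor α w → OccursIn α w N) :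
    exhaust α n ≤ N :=
  Nat.sInf_le h

/-- The letters of `v₀` are the differences of consecutive terms of `⌊nα⌋`. -/
theorem v0_toInt_eq {α : ℝ} (h0 : 0 < α) (h1 : α < 1) (p : ℤ) :
    ((v0 α p).toInt : ℤ) = ⌊((p : ℝ) + 1) * α⌋ - ⌊(p : ℝ) * α⌋ := by
  have hx := Int.floor_add_fract ((p : ℝ) * α)
  have hlt := Int.fract_lt_one ((p : ℝ) * α)
  have hnn := Int.fract_nonneg ((p : ℝ) * α)
  by_cases h : 1 - α ≤ Int.fract ((p : ℝ) * α)
  · have hf : ⌊((p : ℝ) + 1) * α⌋ = ⌊(p : ℝ) * α⌋ + 1 := by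
      rw [Int.floor_eq_iff]; push_cast; constructor <;> linarith
    simp [v0, h, hf]
  · have hf : ⌊((p : ℝ) + 1) * α⌋ = ⌊(p : ℝ) * α⌋ := by
      rw [Int.floor_eq_iff]; push Not at h; constructor <;> linarith
    simp [v0, h, hf]

/-- If two positions carry distinct letters but agree on the `K` preceding letters, then these
letters are those preceding the discontinuity `1 - α` of the coding. -/
theorem v0_toInt_sub_eq {α : ℝ} (h0 : 0 < α) (h1 : α < 1) {P Q : ℤ} {K : ℕ}
    (hP : v0 α P = true) (hQ : v0 α Q = false)
    (hPQ : ∀ k : ℕ, k < K → v0 α (P - (k + 1)) = v0 α (Q - (k + 1))) {k : ℕ} (hk : k < K) :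
    (v0 α (P - (k + 1))).toInt = ⌊1 - α - k * α⌋ - ⌊1 - α - (k + 1) * α⌋ := by
  have hstep (R : ℤ) (j : ℕ) : (v0 α (R - (j + 1))).toInt =
      ⌊Int.fract (R * α) - j * α⌋ - ⌊Int.fract (R * α) - (j + 1) * α⌋ := by
    have hfl (c : ℝ) : ⌊Int.fract (R * α) - c⌋ = ⌊R * α - c⌋ - ⌊R * α⌋ := by
      rw [← Int.floor_sub_intCast]
      congr 1
      rw [Int.fract]
      ring
    rw [v0_toInt_eq h0 h1, hfl, hfl]
    push_cast
    ring_nf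
  have heq (j : ℕ) (hj : j ≤ K) :
      ⌊Int.fract (P * α) - j * α⌋ = ⌊Int.fract (Q * α) - j * α⌋ := by
    induction j with
    | zero => simp
    | succ j ih =>
      have h := congrArg Bool.toInt (hPQ j hj)
      rw [hstep, hstep, ih (by omega)] at h
      push_cast
      omega
  have hmid (j : ℕ) (hj : j ≤ K) : ⌊Int.fract (P * α) - j * α⌋ = ⌊1 - α - j * α⌋ := by
    have hP' : 1 - α ≤ Int.fract (P * α) := by simpa [v0] using hP
    have hQ' : Int.fract (Q * α) < 1 - α := by simpa only [v0, decide_eq_false_iff_not, not_le] using hQ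
    refine le_antisymm ?_ (Int.floor_le_floor (by linarith))
    rw [heq j hj]
    exact Int.floor_le_floor (by linarith)
  have hsucc := hmid (k + 1) hk
  push_cast at hsucc
  rw [hstep, hmid k hk.le, hsucc]

/-- The letters of a right special factor are determined by its length. -/
theorem toInt_getElem_of_rightSpecial {α : ℝ} (h0 : 0 < α) (h1 : α < 1) {u : List Bool}
    (hu1 : IsFactor α (u ++ [true])) (hu0 : IsFactor α (u ++ [false]))
    {k : ℕ} (hk : k < u.length) :
    (u[u.length - 1 - k]'(by omega)).toInt = ⌊1 - α - k * α⌋ - ⌊1 - α - (k + 1) * α⌋ := by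
  obtain ⟨m, hm, hP⟩ := exists_word_of_isFactor_append rfl hu1
  obtain ⟨m', hm', hQ⟩ := exists_word_of_isFactor_append rfl hu0
  have hget {r : ℕ} (hr : u = word α r u.length) {j : ℕ} (hj : j < u.length) :
      u[u.length - 1 - j]'(by omega) = v0 α ((r : ℤ) + 1 + u.length - (j + 1)) := by
    rw [List.getElem_of_eq hr]
    rw [getElem_word]
    congr 1
    omega
  rw [hget hm hk]
  exact v0_toInt_sub_eq h0 h1 hP hQ (fun j hj => (hget hm hj).symm.trans (hget hm' hj)) hk

/-- There is at most one right special factor of each length. -/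
theorem rightSpecial_unique {α : ℝ} (h0 : 0 < α) (h1 : α < 1) {u t : List Bool}
    (hlen : u.length = t.length)
    (hu1 : IsFactor α (u ++ [true])) (hu0 : IsFactor α (u ++ [false]))
    (ht1 : IsFactor α (t ++ [true])) (ht0 : IsFactor α (t ++ [false])) : u = t := by
  refine List.ext_getElem hlen fun i hi hi' => ?_
  have hu := toInt_getElem_of_rightSpecial h0 h1 hu1 hu0 (k := u.length - 1 - i) (by omega)
  have ht := toInt_getElem_of_rightSpecial h0 h1 ht1 ht0 (k := u.length - 1 - i) (by omega)
  have hiu : u.length - 1 - (u.length - 1 - i) = i := by omega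
  have hit : t.length - 1 - (u.length - 1 - i) = i := by omega
  simp only [hiu] at hu
  simp only [hit] at ht
  have h := hu.trans ht.symm
  revert h
  cases u[i] <;> cases t[i] <;> simp

theorem exhaust_succ_ge (α : ℝ) (k : ℕ) : exhaust α k + 1 ≤ exhaust α (k + 1) := by
  have hpos : 1 ≤ exhaust α (k + 1) := by
    have hw := word_length α 0 (k + 1)
    obtain ⟨m, hm, -⟩ := (occursIn_iff hw).1
      (exhaust_spec α (k + 1) hw ((isFactor_iff hw).2 ⟨0, rfl⟩))
    omega
  suffices exhaust α k ≤ exhaust α (k + 1) - 1 by omega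
  refine exhaust_le fun w hw hf => ?_
  obtain ⟨m, rfl⟩ := (isFactor_iff hw).1 hf
  have hw' := word_length α m (k + 1)
  obtain ⟨r, hr, h⟩ := (occursIn_iff hw').1
    (exhaust_spec α (k + 1) hw' ((isFactor_iff hw').2 ⟨m, rfl⟩))
  rw [word_succ] at h
  exact (occursIn_iff hw).2 ⟨r, by omega, (append_singleton_eq_word h).1⟩

/-- For `n ≥ 2`, `f(n) = max (f(n-1) + 1) (g(n))`, where `g(n)` is the
least `N` such that both `t_{n-1}1` and `t_{n-1}0` occur in `(v₀(1), …, v₀(N))`,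
`t_{n-1}` being the (unique) right special factor of length `n-1`. -/
theorem exhaust_eq_max (α : ℝ) (hirr : Irrational α) (h0 : 0 < α) (h1 : α < 1)
    (n : ℕ) (hn : 2 ≤ n) (t : List Bool) (hlen : t.length = n - 1)
    (ht1 : IsFactor α (t ++ [true])) (ht0 : IsFactor α (t ++ [false])) :
    exhaust α n =
      max (exhaust α (n - 1) + 1)
        (sInf {N | OccursIn α (t ++ [true]) N ∧ OccursIn α (t ++ [false]) N}) := by
  obtain ⟨k, rfl⟩ : ∃ k, n = k + 1 := ⟨n - 1, by omega⟩
  rw [Nat.add_sub_cancel] at hlen ⊢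
  have hlen' (b : Bool) : (t ++ [b]).length = k + 1 := by simp [hlen]
  refine le_antisymm ?_ (max_le (exhaust_succ_ge α k)
    (Nat.sInf_le ⟨exhaust_spec α _ (hlen' _) ht1, exhaust_spec α _ (hlen' _) ht0⟩))
  have hg := Nat.sInf_mem
    (s := {N | OccursIn α (t ++ [true]) N ∧ OccursIn α (t ++ [false]) N})
    ⟨_, exhaust_spec α _ (hlen' _) ht1, exhaust_spec α _ (hlen' _) ht0⟩
  refine exhaust_le fun w hw hf => ?_
  obtain ⟨u, b, rfl⟩ := List.eq_nil_or_concat' w |>.resolve_left (by rintro rfl; simp at hw)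
  have hu : u.length = k := by simpa using hw
  by_cases hut : u = t
  · subst hut
    cases b
    · exact hg.2.mono (le_max_right _ _)
    · exact hg.1.mono (le_max_right _ _)
  · obtain ⟨m, hm, -⟩ := exists_word_of_isFactor_append hu hf
    obtain ⟨r, hr, hur⟩ := (occursIn_iff hu).1 (exhaust_spec α k hu ((isFactor_iff hu).2 ⟨m, hm⟩))
    have hext : u ++ [v0 α ((r : ℤ) + 1 + k)] = word α r (k + 1) := by rw [word_succ, ← hur]
    have hfac : IsFactor α (u ++ [v0 α ((r : ℤ) + 1 + k)]) :=
      (isFactor_iff (by simp [hu])).2 ⟨r, hext⟩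
    have hb : v0 α ((r : ℤ) + 1 + k) = b := by
      by_contra hne
      refine hut (rightSpecial_unique h0 h1 (hu.trans hlen.symm) ?_ ?_ ht1 ht0) <;>
        cases b <;> cases hc : v0 α ((r : ℤ) + 1 + k) <;> simp_all
    rw [hb] at hext
    exact ((occursIn_iff hw).2 ⟨r, by omega, hext⟩ : OccursIn α _ (exhaust α k + 1)).mono
      (le_max_left _ _)

end
end

section
/- Let k ≥ 2, 0 ≤ j ≤ F_{k−1} − 1, and n = F_k + j. For every v ∈ Ω and every factor w of v₀ of length n, the frequency lim_{N→∞} (1/N)·#{1 ≤ m ≤ N : (v(m), …, v(m+n−1)) = w} exists and belongs to {τ^{−(k−1)}, τ^{−k}, τ^{−(k+1)}}. The frequency equals τ^{−(k−1)} precisely for the F_{k−1} − j − 1 factors that occur in the prefix (v₀(1), …, v₀(F_{k+1} − 2)); exactly F_{k−2} + j + 1 factors have frequency τ^{−k}, and exactly j + 1 factors have frequency τ^{−(k+1)}. -/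
open scoped Classical

noncomputable section

/-- Fibonacci numbers with `F 0 = 1`, `F 1 = 1`, `F 2 = 2`. -/
def F (n : ℕ) : ℕ := Nat.fib (n + 1)

/-- `v` has frequency `L` of the word `w`: the proportion of positions `1 ≤ m ≤ N` where
`(v(m), …, v(m + |w| - 1)) = w` tends to `L`. -/
def HasFreq (v : ℤ → Bool) (w : List Bool) (L : ℝ) : Prop :=
  Filter.Tendsto
    (fun N : ℕ =>
      (((Finset.Icc 1 N).filter (fun m : ℕ => wordAt v (m : ℤ) w.length = w)).card : ℝ) / N)
    Filter.atTop (nhds L)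

/-- `g` lifts the rotation by `β = ± α` to the unit interval, the two-letter word `v0 α` records the
increments of `g`, and `A`, `B`, `C` are consecutive convergent denominators: `x`, `y` are the
distances of `A β`, `B β` to the integers, on opposite sides. -/
structure RotationCoding (α β : ℝ) (s A B C n : ℤ) (x y : ℝ) (g : ℤ → ℝ) : Prop where
  nonneg : ∀ p, 0 ≤ g p
  le_one : ∀ p, g p ≤ 1
  sub_lt_one : ∀ p q, g p - g q < 1
  lift : ∀ p, ∃ z : ℤ, g p = β * p + z
  step : ∀ p q, v0 α p = v0 α q ↔ g (p + 1) - g p = g (q + 1) - g q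
  irr : Irrational β
  s_sq : s * s = 1
  A_eq : A = B + C
  B_pos : 0 < B
  C_pos : 0 < C
  det_sq : (A * C - B * B) * (A * C - B * B) = 1
  A_le : A ≤ n
  n_lt : n < A + B
  A_lift : β * A - s * B = x
  B_lift : β * B - s * C = -y
  x_pos : 0 < x
  x_lt_y : x < y
  add_lt_one : x + y < 1

/-- Among `g p, …, g (p + n)` the value `g (p + i)` is smallest. -/
def IsMinIdx (g : ℤ → ℝ) (n p i : ℤ) : Prop :=
  0 ≤ i ∧ i ≤ n ∧ ∀ i', 0 ≤ i' → i' ≤ n → g (p + i) ≤ g (p + i')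

/-- The index of the neighbour of `-i β` among the points `0, -β, …, -n β` of the circle. -/
def succIdx (A B n i : ℤ) : ℤ :=
  if A ≤ i then i - A else if i + B ≤ n then i + B else i + B - A

/-- The distance from `-i β` to its neighbour. -/
def gapLen (A B n : ℤ) (x y : ℝ) (i : ℤ) : ℝ :=
  if A ≤ i then x else if i + B ≤ n then y else x + y

theorem wordAt_eq_iff (v v' : ℤ → Bool) (p q : ℤ) (n : ℕ) :
    wordAt v p n = wordAt v' q n ↔ ∀ i : ℕ, i < n → v (p + i) = v' (q + i) := by
  simp only [wordAt, List.map_inj_left]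
  simp
  grind

theorem length_wordAt (v : ℤ → Bool) (p : ℤ) (n : ℕ) : (wordAt v p n).length = n := by
  simp [wordAt]

theorem word_eq_wordAt (α : ℝ) (m n : ℕ) : word α m n = wordAt (v0 α) (m + 1) n := rfl

namespace RotationCoding

variable {α β : ℝ} {s A B C n : ℤ} {x y : ℝ} {g : ℤ → ℝ}

theorem exists_sub_eq (h : RotationCoding α β s A B C n x y g) (p q : ℤ) :
    ∃ z : ℤ, g p - g q = β * (p - q) + z := by
  obtain ⟨z, hz⟩ := h.lift p
  obtain ⟨z', hz'⟩ := h.lift q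
  exact ⟨z - z', by rw [hz, hz']; push_cast; ring⟩

theorem injective (h : RotationCoding α β s A B C n x y g) {p q : ℤ} (hpq : g p = g q) :
    p = q := by
  obtain ⟨z, hz⟩ := h.exists_sub_eq p q
  by_contra hne
  have hne' : p - q ≠ 0 := sub_ne_zero.2 hne
  refine (h.irr.mul_intCast hne').ne_int (-z) ?_
  push_cast
  linarith

/-- Two differences of values of `g` that agree modulo one and are both in `[0, 1)` agree. -/
theorem sub_eq_sub (h : RotationCoding α β s A B C n x y g) {p q p' q' : ℤ}
    (hd : p - q = p' - q') (h1 : g q ≤ g p) (h2 : g q' ≤ g p') : g p - g q = g p' - g q' := by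
  obtain ⟨z, hz⟩ := h.exists_sub_eq p q
  obtain ⟨z', hz'⟩ := h.exists_sub_eq p' q'
  have hd' : (p : ℝ) - q = p' - q' := by exact_mod_cast hd
  have hlt := h.sub_lt_one p q
  have hlt' := h.sub_lt_one p' q'
  rw [← hd'] at hz'
  have e1 : z < z' + 1 := by
    have : (z : ℝ) < z' + 1 := by linarith
    exact_mod_cast this
  have e2 : z' < z + 1 := by
    have : (z' : ℝ) < z + 1 := by linarith
    exact_mod_cast this
  have : z = z' := by omega
  rw [hz, hz', this]

theorem exists_isMinIdx (h : RotationCoding α β s A B C n x y g) (p : ℤ) :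
    ∃ i, IsMinIdx g n p i := by
  have hn : 0 ≤ n := by linarith [h.A_le, h.A_eq, h.B_pos, h.C_pos]
  obtain ⟨i, hi, hmin⟩ := (Finset.Icc 0 n).exists_min_image (fun i => g (p + i))
    ⟨0, by simpa using hn⟩
  rw [Finset.mem_Icc] at hi
  exact ⟨i, hi.1, hi.2, fun i' h0 h1 => hmin i' (Finset.mem_Icc.2 ⟨h0, h1⟩)⟩

theorem isMinIdx_unique (h : RotationCoding α β s A B C n x y g) {p i i' : ℤ}
    (hi : IsMinIdx g n p i) (hi' : IsMinIdx g n p i') : i = i' := by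
  have := h.injective (le_antisymm (hi.2.2 i' hi'.1 hi'.2.1) (hi'.2.2 i hi.1 hi.2.1))
  linarith

theorem forall_step_iff (h : RotationCoding α β s A B C n x y g) (p q : ℤ) (N : ℕ) :
    (∀ i : ℕ, i < N → v0 α (p + i) = v0 α (q + i)) ↔
      ∀ i : ℕ, i ≤ N → g (p + i) - g p = g (q + i) - g q := by
  constructor
  · intro hw i hi
    induction i with
    | zero => simp
    | succ i ih =>
      have e := (h.step _ _).1 (hw i (by omega))
      have ih := ih (by omega)
      push_cast
      rw [← add_assoc, ← add_assoc]
      linarith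
  · intro hw i hi
    have e1 := hw i hi.le
    have e2 := hw (i + 1) hi
    push_cast at e2
    rw [← add_assoc, ← add_assoc] at e2
    rw [h.step]
    linarith

/-- Two positions carry the same word of length `N` exactly when they have the same minimal index. -/
theorem wordAt_eq_iff_isMinIdx {N : ℕ} (h : RotationCoding α β s A B C N x y g) {p i : ℤ} (q : ℤ)
    (hp : IsMinIdx g N p i) :
    wordAt (v0 α) q N = wordAt (v0 α) p N ↔ IsMinIdx g N q i := by
  rw [wordAt_eq_iff, h.forall_step_iff]
  constructor
  · intro hw
    have hw' : ∀ i : ℤ, 0 ≤ i → i ≤ N → g (q + i) - g q = g (p + i) - g p := by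
      intro i h0 h1
      lift i to ℕ using h0
      exact hw i (by exact_mod_cast h1)
    refine ⟨hp.1, hp.2.1, fun i' h0 h1 => ?_⟩
    linarith [hw' i hp.1 hp.2.1, hw' i' h0 h1, hp.2.2 i' h0 h1]
  · intro hq i' hi'
    have key : ∀ i' : ℤ, 0 ≤ i' → i' ≤ N → g (q + i') - g (q + i) = g (p + i') - g (p + i) :=
      fun i' h0 h1 => h.sub_eq_sub (by ring) (hq.2.2 i' h0 h1) (hp.2.2 i' h0 h1)
    have k1 := key i' (by positivity) (by exact_mod_cast hi')
    have k0 := key 0 le_rfl (by positivity)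
    simp only [add_zero] at k0
    linarith

/-- Best approximation: lower bounds for the positive distances between the points `-i β`. -/
theorem gap_bound (h : RotationCoding α β s A B C n x y g) {i i' e : ℤ} (hi0 : 0 ≤ i)
    (hin : i ≤ n) (hi0' : 0 ≤ i') (hin' : i' ≤ n) (hpos : 0 < β * (i - i') + e) :
    (A ≤ i ∧ x ≤ β * (i - i') + e) ∨ (i + B ≤ n ∧ y ≤ β * (i - i') + e) ∨
      x + y ≤ β * (i - i') + e := by
  have hx := h.x_pos
  have hxy := h.x_lt_y
  have hB := h.B_pos
  have hA := h.A_eq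
  have hC := h.C_pos
  have hn := h.n_lt
  obtain ⟨D, hD⟩ : ∃ D, D = A * C - B * B := ⟨_, rfl⟩
  have hDD : D * D = 1 := by rw [hD]; exact h.det_sq
  obtain ⟨a, ha⟩ : ∃ a, a = D * ((i - i') * C + s * e * B) := ⟨_, rfl⟩
  obtain ⟨b, hb⟩ : ∃ b, b = -D * (A * (s * e) + B * (i - i')) := ⟨_, rfl⟩
  have hd : i - i' = a * A + b * B := by
    rw [ha, hb]
    linear_combination (-(i - i')) * hDD + D * (i - i') * hD
  have he : -e = s * (a * B + b * C) := by
    rw [ha, hb]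
    linear_combination e * hDD - D * e * hD + (D * A * C * e - D * B * B * e) * h.s_sq
  have hδ : β * (i - i') + e = a * x - b * y := by
    have hd' : (i : ℝ) - i' = a * A + b * B := by exact_mod_cast hd
    have he' : -(e : ℝ) = s * (a * B + b * C) := by exact_mod_cast he
    rw [hd']
    linear_combination -he' + a * h.A_lift + b * h.B_lift
  rw [hδ] at hpos ⊢
  rcases le_or_gt a 0 with ha0 | ha0
  · have ha' : (a : ℝ) ≤ 0 := by exact_mod_cast ha0
    have hb0 : b ≤ -1 := by
      by_contra hcon
      have hb' : (0 : ℝ) ≤ b := by exact_mod_cast (by omega : (0 : ℤ) ≤ b)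
      nlinarith
    have hb' : (b : ℝ) ≤ -1 := by exact_mod_cast hb0
    rcases eq_or_lt_of_le ha0 with ha1 | ha1
    · subst ha1
      refine Or.inr (Or.inl ⟨?_, ?_⟩)
      · nlinarith
      · simp only [Int.cast_zero]
        nlinarith
    · exfalso
      have : a ≤ -1 := by omega
      nlinarith
  · have ha1 : 1 ≤ a := ha0
    have ha' : (1 : ℝ) ≤ a := by exact_mod_cast ha1
    rcases lt_trichotomy b 0 with hb0 | hb0 | hb0
    · have hb' : (b : ℝ) ≤ -1 := by exact_mod_cast (by omega : b ≤ -1)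
      refine Or.inr (Or.inr ?_)
      nlinarith
    · subst hb0
      refine Or.inl ⟨?_, ?_⟩
      · nlinarith
      · simp only [Int.cast_zero]
        nlinarith
    · exfalso
      have : 1 ≤ b := hb0
      nlinarith

theorem gapLen_pos (h : RotationCoding α β s A B C n x y g) (i : ℤ) :
    0 < gapLen A B n x y i := by
  have := h.x_pos
  have := h.x_lt_y
  unfold gapLen
  split_ifs <;> linarith

theorem gapLen_lt_one (h : RotationCoding α β s A B C n x y g) (i : ℤ) :
    gapLen A B n x y i < 1 := by
  have := h.x_pos
  have := h.x_lt_y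
  have := h.add_lt_one
  unfold gapLen
  split_ifs <;> linarith

theorem succIdx_mem (h : RotationCoding α β s A B C n x y g) {i : ℤ} (h0 : 0 ≤ i) (h1 : i ≤ n) :
    0 ≤ succIdx A B n i ∧ succIdx A B n i ≤ n := by
  have := h.A_eq
  have := h.B_pos
  have := h.C_pos
  have := h.A_le
  unfold succIdx
  split_ifs <;> omega

theorem exists_succ_sub (h : RotationCoding α β s A B C n x y g) (p i : ℤ) :
    ∃ z : ℤ, g (p + succIdx A B n i) - g (p + i) = z - gapLen A B n x y i := by
  obtain ⟨z, hz⟩ := h.exists_sub_eq (p + succIdx A B n i) (p + i)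
  have hA := h.A_lift
  have hB := h.B_lift
  rw [hz]
  unfold succIdx gapLen
  split_ifs
  · exact ⟨z - s * B, by push_cast; linear_combination -hA⟩
  · exact ⟨z + s * C, by push_cast; linear_combination hB⟩
  · exact ⟨z + s * C - s * B, by push_cast; linear_combination hB - hA⟩

theorem succ_sub_of_le (h : RotationCoding α β s A B C n x y g) {p i : ℤ}
    (hle : g (p + i) ≤ g (p + succIdx A B n i)) :
    g (p + succIdx A B n i) - g (p + i) = 1 - gapLen A B n x y i := by
  obtain ⟨z, hz⟩ := h.exists_succ_sub p i
  have h1 := h.gapLen_pos i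
  have h2 := h.gapLen_lt_one i
  have h3 := h.sub_lt_one (p + succIdx A B n i) (p + i)
  have e1 : (0 : ℝ) < z := by linarith
  have e2 : (z : ℝ) < 2 := by linarith
  have : z = 1 := by
    have : 0 < z := by exact_mod_cast e1
    have : z < 2 := by exact_mod_cast e2
    omega
  rw [hz, this, Int.cast_one]

theorem succ_sub_of_lt (h : RotationCoding α β s A B C n x y g) {p i : ℤ}
    (hlt : g (p + succIdx A B n i) < g (p + i)) :
    g (p + succIdx A B n i) - g (p + i) = - gapLen A B n x y i := by
  obtain ⟨z, hz⟩ := h.exists_succ_sub p i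
  have h1 := h.gapLen_pos i
  have h2 := h.gapLen_lt_one i
  have h3 := h.sub_lt_one (p + i) (p + succIdx A B n i)
  have e1 : (-1 : ℝ) < z := by linarith
  have e2 : (z : ℝ) < 1 := by linarith
  have : z = 0 := by
    have : -1 < z := by exact_mod_cast e1
    have : z < 1 := by exact_mod_cast e2
    omega
  rw [hz, this, Int.cast_zero, zero_sub]

theorem isMinIdx_iff (h : RotationCoding α β s A B C n x y g) {p i : ℤ} (h0 : 0 ≤ i)
    (h1 : i ≤ n) : IsMinIdx g n p i ↔ g (p + i) ≤ g (p + succIdx A B n i) := by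
  refine ⟨fun hm => hm.2.2 _ (h.succIdx_mem h0 h1).1 (h.succIdx_mem h0 h1).2, fun hle => ?_⟩
  refine ⟨h0, h1, fun i' h0' h1' => ?_⟩
  by_contra hcon
  have hs := h.succ_sub_of_le hle
  have hl := h.sub_lt_one (p + succIdx A B n i) (p + i')
  obtain ⟨e, he⟩ := h.exists_sub_eq (p + i) (p + i')
  have he' : g (p + i) - g (p + i') = β * (i - i') + e := by
    rw [he]; push_cast; ring
  have hx := h.x_pos
  have hxy := h.x_lt_y
  have hpos : 0 < β * (i - i') + e := by linarith
  have hb := h.gap_bound h0 h1 h0' h1' hpos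
  rw [← he'] at hb
  unfold gapLen at hs
  split_ifs at hs with c1 c2
  · rcases hb with hb | hb | hb <;> linarith
  · rcases hb with hb | hb | hb
    · exact c1 hb.1
    · linarith
    · linarith
  · rcases hb with hb | hb | hb
    · exact c1 hb.1
    · exact c2 hb.1
    · linarith

/-- The indicator function of a minimal index is a constant plus a coboundary. -/
theorem indicator_eq (h : RotationCoding α β s A B C n x y g) {i : ℤ} (h0 : 0 ≤ i) (h1 : i ≤ n)
    (p : ℤ) : (if IsMinIdx g n p i then (1 : ℝ) else 0) =
      gapLen A B n x y i + (g (p + succIdx A B n i) - g (p + i)) := by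
  rw [h.isMinIdx_iff h0 h1]
  split_ifs with hle
  · rw [h.succ_sub_of_le hle]; ring
  · rw [h.succ_sub_of_lt (not_le.1 hle)]; ring

end RotationCoding

theorem abs_sum_shift_le {f : ℤ → ℝ} (h0 : ∀ p, 0 ≤ f p) (h1 : ∀ p, f p ≤ 1) (c : ℤ) (d N : ℕ) :
    |∑ m ∈ Finset.Icc 1 N, (f (m + c + d) - f (m + c))| ≤ d := by
  induction d with
  | zero => simp
  | succ d ih =>
    have tele : ∀ N : ℕ, ∑ m ∈ Finset.Icc 1 N, (f (m + c + (d + 1 : ℕ)) - f (m + c + d)) =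
        f (N + 1 + c + d) - f (1 + c + d) := by
      intro N
      induction N with
      | zero => simp
      | succ N ihN =>
        rw [Finset.sum_Icc_succ_top (by omega), ihN]
        have e1 : ((N + 1 : ℕ) : ℤ) + c + (d + 1 : ℕ) = ((N + 1 : ℕ) : ℤ) + 1 + c + d := by
          push_cast; ring
        rw [e1]
        push_cast
        ring
    have split : ∑ m ∈ Finset.Icc 1 N, (f (m + c + (d + 1 : ℕ)) - f (m + c)) =
        ∑ m ∈ Finset.Icc 1 N, (f (m + c + (d + 1 : ℕ)) - f (m + c + d)) +
          ∑ m ∈ Finset.Icc 1 N, (f (m + c + d) - f (m + c)) := by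
      rw [← Finset.sum_add_distrib]
      exact Finset.sum_congr rfl fun m _ => by ring
    rw [split, tele]
    have h2 : |f (N + 1 + c + d) - f (1 + c + d)| ≤ 1 := by
      rw [abs_le]
      constructor <;> linarith [h0 (N + 1 + c + d), h1 (N + 1 + c + d), h0 (1 + c + d),
        h1 (1 + c + d)]
    push_cast
    linarith [abs_add_le (f (N + 1 + c + d) - f (1 + c + d))
      (∑ m ∈ Finset.Icc 1 N, (f (m + c + d) - f (m + c)))]

theorem abs_sum_sub_le {f : ℤ → ℝ} (h0 : ∀ p, 0 ≤ f p) (h1 : ∀ p, f p ≤ 1) (a b : ℤ) (N : ℕ) :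
    |∑ m ∈ Finset.Icc 1 N, (f (m + b) - f (m + a))| ≤ |(b - a : ℤ)| := by
  rcases le_total a b with hab | hab
  · obtain ⟨d, hd⟩ := Int.eq_ofNat_of_zero_le (sub_nonneg.2 hab)
    have := abs_sum_shift_le h0 h1 a d N
    rw [hd, Nat.abs_cast, Int.cast_natCast]
    simpa only [add_assoc, show a + (d : ℤ) = b by omega] using this
  · obtain ⟨d, hd⟩ := Int.eq_ofNat_of_zero_le (sub_nonneg.2 hab)
    have := abs_sum_shift_le h0 h1 b d N
    rw [abs_sub_comm, hd, Nat.abs_cast, Int.cast_natCast, ← abs_neg, ← Finset.sum_neg_distrib]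
    simpa only [neg_sub, add_assoc, show b + (d : ℤ) = a by omega] using this

theorem tendsto_div_of_abs_sub_le {c : ℕ → ℝ} {L K : ℝ} (h : ∀ N : ℕ, |c N - N * L| ≤ K) :
    Filter.Tendsto (fun N : ℕ => c N / N) Filter.atTop (nhds L) := by
  rw [tendsto_iff_norm_sub_tendsto_zero]
  refine squeeze_zero' (Filter.Eventually.of_forall fun N => norm_nonneg _) ?_
    (tendsto_const_div_atTop_nhds_zero_nat K)
  filter_upwards [Filter.eventually_gt_atTop 0] with N hN
  have hN' : (0 : ℝ) < N := by exact_mod_cast hN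
  have : c N / N - L = (c N - N * L) / N := by field_simp
  rw [this, Real.norm_eq_abs, abs_div, abs_of_pos hN']
  exact div_le_div_of_nonneg_right (h N) hN'.le

/-- A sequence of the hull agrees with a translate of `v0 α` on every finite window. -/
theorem exists_translate_of_mem_hull {α : ℝ} {v : ℤ → Bool} (hv : v ∈ hull α) (S : Finset ℤ) :
    ∃ M : ℤ, ∀ p ∈ S, v p = v0 α (p - M) := by
  have hopen : IsOpen ((S : Set ℤ).pi fun p => ({v p} : Set Bool)) :=
    isOpen_set_pi S.finite_toSet fun _ _ => isOpen_discrete _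
  obtain ⟨u, hu, M, rfl⟩ := mem_closure_iff.1 hv _ hopen (by simp)
  exact ⟨M, fun p hp => (hu p hp).symm⟩

theorem RotationCoding.hasFreq {α β : ℝ} {s A B C : ℤ} {n : ℕ} {x y : ℝ} {g : ℤ → ℝ}
    (h : RotationCoding α β s A B C n x y g) {v : ℤ → Bool} (hv : v ∈ hull α) {p i : ℤ}
    (hp : IsMinIdx g n p i) :
    HasFreq v (wordAt (v0 α) p n) (gapLen A B n x y i) := by
  rw [HasFreq, length_wordAt]
  refine tendsto_div_of_abs_sub_le (K := (|succIdx A B n i - i| : ℤ)) fun N => ?_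
  obtain ⟨M, hM⟩ := exists_translate_of_mem_hull hv (Finset.Icc 1 (N + n))
  have hiff : ∀ m ∈ Finset.Icc 1 N,
      (wordAt v (m : ℤ) n = wordAt (v0 α) p n ↔ IsMinIdx g n (m - M) i) := by
    intro m hm
    rw [Finset.mem_Icc] at hm
    rw [← h.wordAt_eq_iff_isMinIdx _ hp]
    have : wordAt v (m : ℤ) n = wordAt (v0 α) (m - M) n := by
      rw [wordAt_eq_iff]
      intro l hl
      rw [hM _ (by rw [Finset.mem_Icc]; omega)]
      congr 1
      ring
    rw [this]
  rw [Finset.filter_congr hiff, Finset.card_filter, Nat.cast_sum]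
  have hsum : ∑ m ∈ Finset.Icc 1 N, ((if IsMinIdx g n (m - M) i then 1 else 0 : ℕ) : ℝ) =
      N * gapLen A B n x y i +
        ∑ m ∈ Finset.Icc 1 N, (g (m + (succIdx A B n i - M)) - g (m + (i - M))) := by
    have : (N : ℝ) * gapLen A B n x y i = ∑ m ∈ Finset.Icc 1 N, gapLen A B n x y i := by simp
    rw [this, ← Finset.sum_add_distrib]
    refine Finset.sum_congr rfl fun m _ => ?_
    push_cast
    rw [h.indicator_eq hp.1 hp.2.1]
    congr 3 <;> ring
  rw [hsum, add_sub_cancel_left]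
  refine (abs_sum_sub_le h.nonneg h.le_one _ _ N).trans_eq ?_
  congr 2
  ring

/-- Every index is the minimal index of some positive position. -/
theorem RotationCoding.exists_pos_isMinIdx {α β : ℝ} {s A B C : ℤ} {n : ℕ} {x y : ℝ} {g : ℤ → ℝ}
    (h : RotationCoding α β s A B C n x y g) {i : ℤ} (h0 : 0 ≤ i) (h1 : i ≤ n) :
    ∃ m : ℕ, IsMinIdx g n (m + 1) i := by
  by_contra! hcon
  obtain ⟨N, hN⟩ := exists_nat_gt
    (((|succIdx A B n i - i| : ℤ) : ℝ) / gapLen A B n x y i)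
  rw [div_lt_iff₀ (h.gapLen_pos i)] at hN
  have hb := abs_sum_sub_le h.nonneg h.le_one i (succIdx A B n i) N
  have hsum : ∑ m ∈ Finset.Icc 1 N, (g (m + succIdx A B n i) - g (m + i)) =
      -(N * gapLen A B n x y i) := by
    have : -((N : ℝ) * gapLen A B n x y i) = ∑ m ∈ Finset.Icc 1 N, -gapLen A B n x y i := by simp
    rw [this]
    refine Finset.sum_congr rfl fun m hm => ?_
    have hm1 := (Finset.mem_Icc.1 hm).1
    have := h.indicator_eq h0 h1 m
    have hnot := hcon (m - 1)
    rw [show (((m - 1 : ℕ) : ℤ) + 1) = m by omega] at hnot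
    rw [if_neg hnot] at this
    linarith
  rw [hsum, abs_neg] at hb
  linarith [le_abs_self ((N : ℝ) * gapLen A B n x y i)]

theorem RotationCoding.isMinIdx_of_add_lt {α β : ℝ} {s A B C n : ℤ} {x y : ℝ} {g : ℤ → ℝ}
    (h : RotationCoding α β s A B C n x y g) {p : ℤ} (hp : 1 ≤ p) (hpn : p + n < A + B) :
    IsMinIdx g n p (A - p) := by
  have hA := h.A_eq
  have hB := h.B_pos
  have hC := h.C_pos
  have hAn := h.A_le
  have hx := h.x_pos
  have hxy := h.x_lt_y
  have hlt := h.add_lt_one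
  rw [h.isMinIdx_iff (by omega) (by omega), succIdx, if_neg (by omega), if_neg (by omega),
    show p + (A - p) = A by ring, show p + (A - p + B - A) = B by ring]
  obtain ⟨z, hz⟩ := h.lift A
  obtain ⟨z', hz'⟩ := h.lift B
  have eA : g A = x + (s * B + z : ℤ) := by
    rw [hz]; push_cast; linear_combination h.A_lift
  have eB : g B = -y + (s * C + z' : ℤ) := by
    rw [hz']; push_cast; linear_combination h.B_lift
  generalize s * B + z = a at eA
  generalize s * C + z' = b at eB
  have ha : a ≤ 0 := by
    have : (a : ℝ) < 1 := by linarith [h.le_one A]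
    exact Int.lt_add_one_iff.1 (by exact_mod_cast this)
  have hb : 1 ≤ b := by
    have : (0 : ℝ) < b := by linarith [h.nonneg B]
    exact_mod_cast this
  have ha' : (a : ℝ) ≤ 0 := by exact_mod_cast ha
  have hb' : (1 : ℝ) ≤ b := by exact_mod_cast hb
  linarith

theorem fract_step (α : ℝ) (h0 : 0 < α) (h1 : α < 1) (p : ℤ) :
    Int.fract (((p + 1 : ℤ) : ℝ) * α) =
      Int.fract ((p : ℝ) * α) + α - (if v0 α p then 1 else 0) := by
  have h2 := Int.fract_nonneg ((p : ℝ) * α)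
  have h3 := Int.fract_lt_one ((p : ℝ) * α)
  have h4 := Int.floor_add_fract ((p : ℝ) * α)
  rw [Int.fract_eq_iff]
  simp only [v0, decide_eq_true_eq]
  split_ifs with hc
  · exact ⟨by linarith, by linarith, ⌊(p : ℝ) * α⌋ + 1, by push_cast; linarith⟩
  · exact ⟨by linarith, by linarith, ⌊(p : ℝ) * α⌋, by push_cast; linarith⟩

theorem fract_step_iff (α : ℝ) (h0 : 0 < α) (h1 : α < 1) (p q : ℤ) :
    v0 α p = v0 α q ↔
      Int.fract (((p + 1 : ℤ) : ℝ) * α) - Int.fract ((p : ℝ) * α) =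
        Int.fract (((q + 1 : ℤ) : ℝ) * α) - Int.fract ((q : ℝ) * α) := by
  rw [fract_step α h0 h1, fract_step α h0 h1]
  constructor
  · intro h
    rw [h]
    ring
  · intro h
    cases hp : v0 α p <;> cases hq : v0 α q <;> simp [hp, hq] at h ⊢ <;> linarith

theorem mul_fib_succ_sub_fib {α : ℝ} (hsq : α ^ 2 = 1 - α) (m : ℕ) :
    α * Nat.fib (m + 1) - Nat.fib m = (-1) ^ m * α ^ (m + 1) := by
  induction m using Nat.twoStepInduction with
  | zero => simp
  | one => norm_num; linarith
  | more m ih1 ih2 =>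
    have e1 : (Nat.fib (m + 2 + 1) : ℝ) = Nat.fib (m + 1) + Nat.fib (m + 1 + 1) := by
      exact_mod_cast Nat.fib_add_two
    have e2 : (Nat.fib (m + 2) : ℝ) = Nat.fib m + Nat.fib (m + 1) := by
      exact_mod_cast Nat.fib_add_two
    linear_combination α * e1 - e2 + ih1 + ih2 - (-1) ^ m * α ^ (m + 1) * hsq

theorem fib_cassini (m : ℕ) :
    (Nat.fib (m + 2) * Nat.fib m - Nat.fib (m + 1) * Nat.fib (m + 1) : ℤ) = (-1) ^ (m + 1) := by
  induction m with
  | zero => simp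
  | succ m ih =>
    have e1 : (Nat.fib (m + 1 + 2) : ℤ) = Nat.fib (m + 1) + Nat.fib (m + 2) := by
      exact_mod_cast Nat.fib_add_two
    have e2 : (Nat.fib (m + 2) : ℤ) = Nat.fib m + Nat.fib (m + 1) := by
      exact_mod_cast Nat.fib_add_two
    rw [show m + 1 + 1 = m + 2 from rfl, e1, pow_succ, ← ih, e2]
    ring

theorem exists_rotationCoding {α : ℝ} (h0 : 0 < α) (h1 : α < 1) (hsq : α ^ 2 = 1 - α)
    (hirr : Irrational α) (r : ℕ) (n : ℤ) (hlo : (Nat.fib (r + 3) : ℤ) ≤ n)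
    (hhi : n < Nat.fib (r + 3) + Nat.fib (r + 2)) :
    ∃ β s g, RotationCoding α β s (Nat.fib (r + 3)) (Nat.fib (r + 2)) (Nat.fib (r + 1)) n
      (α ^ (r + 3)) (α ^ (r + 2)) g := by
  have hA : (Nat.fib (r + 3) : ℤ) = Nat.fib (r + 2) + Nat.fib (r + 1) := by
    have : Nat.fib (r + 3) = Nat.fib (r + 1) + Nat.fib (r + 2) := Nat.fib_add_two
    omega
  have hB : (0 : ℤ) < Nat.fib (r + 2) := by exact_mod_cast Nat.fib_pos.2 (by omega)
  have hC : (0 : ℤ) < Nat.fib (r + 1) := by exact_mod_cast Nat.fib_pos.2 (by omega)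
  have hdet : ((Nat.fib (r + 3) : ℤ) * Nat.fib (r + 1) - Nat.fib (r + 2) * Nat.fib (r + 2)) *
      (Nat.fib (r + 3) * Nat.fib (r + 1) - Nat.fib (r + 2) * Nat.fib (r + 2)) = 1 := by
    rw [fib_cassini (r + 1), ← mul_pow]; simp
  have hx : 0 < α ^ (r + 3) := by positivity
  have hxy : α ^ (r + 3) < α ^ (r + 2) := pow_lt_pow_right_of_lt_one₀ h0 h1 (by omega)
  have hlt : α ^ (r + 3) + α ^ (r + 2) < 1 := by
    have : α ^ (r + 3) + α ^ (r + 2) = α ^ (r + 1) := by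
      linear_combination α ^ (r + 1) * hsq
    rw [this]
    exact pow_lt_one₀ h0.le h1 (by omega)
  have eA := mul_fib_succ_sub_fib hsq (r + 2)
  have eB := mul_fib_succ_sub_fib hsq (r + 1)
  have fn := fun p : ℤ => Int.fract_nonneg ((p : ℝ) * α)
  have fl := fun p : ℤ => Int.fract_lt_one ((p : ℝ) * α)
  have ff := fun p : ℤ => Int.floor_add_fract ((p : ℝ) * α)
  rcases Nat.even_or_odd r with hr | hr
  · refine ⟨α, 1, fun p => Int.fract ((p : ℝ) * α), fn, fun p => (fl p).le,
      fun p q => by linarith [fn q, fl p], fun p => ⟨-⌊(p : ℝ) * α⌋, ?_⟩,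
      fract_step_iff α h0 h1, hirr, by norm_num, hA, hB, hC, hdet, hlo, hhi, ?_, ?_, hx, hxy, hlt⟩
    · push_cast; linarith [ff p]
    · rw [pow_add (-1 : ℝ) r 2, hr.neg_one_pow] at eA
      push_cast; linarith
    · rw [pow_succ (-1 : ℝ) r, hr.neg_one_pow] at eB
      push_cast; linarith
  · refine ⟨-α, -1, fun p => 1 - Int.fract ((p : ℝ) * α), fun p => by linarith [fl p],
      fun p => by linarith [fn p], fun p q => by linarith [fn p, fl q],
      fun p => ⟨1 + ⌊(p : ℝ) * α⌋, ?_⟩, fun p q => ?_, hirr.neg, by norm_num, hA, hB, hC, hdet,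
      hlo, hhi, ?_, ?_, hx, hxy, hlt⟩
    · push_cast; linarith [ff p]
    · rw [fract_step_iff α h0 h1 p q]
      constructor <;> intro h <;> linarith
    · rw [pow_add (-1 : ℝ) r 2, hr.neg_one_pow] at eA
      push_cast; linarith
    · rw [pow_succ (-1 : ℝ) r, hr.neg_one_pow] at eB
      push_cast; linarith

/-- A property of the factors of length `n` that depends only on the minimal index holds for as
many factors as there are indices. -/
theorem RotationCoding.ncard_factors {α β : ℝ} {s A B C : ℤ} {n : ℕ} {x y : ℝ} {g : ℤ → ℝ}
    (h : RotationCoding α β s A B C n x y g) (P : List Bool → Prop) (I : Finset ℤ)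
    (hI : ∀ i ∈ I, 0 ≤ i ∧ i ≤ n)
    (hP : ∀ p i, IsMinIdx g n p i → (P (wordAt (v0 α) p n) ↔ i ∈ I)) :
    {w : List Bool | w.length = n ∧ IsFactor α w ∧ P w}.ncard = I.card := by
  have hex : ∀ i : ℤ, ∃ m : ℕ, i ∈ I → IsMinIdx g n (m + 1) i := by
    intro i
    by_cases hi : i ∈ I
    · obtain ⟨m, hm⟩ := h.exists_pos_isMinIdx (hI i hi).1 (hI i hi).2
      exact ⟨m, fun _ => hm⟩
    · exact ⟨0, fun hi' => absurd hi' hi⟩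
  choose m hm using hex
  have himg : {w : List Bool | w.length = n ∧ IsFactor α w ∧ P w} =
      (fun i => word α (m i) n) '' (I : Set ℤ) := by
    ext w
    constructor
    · rintro ⟨hlen, ⟨q, hq⟩, hw⟩
      rw [hlen, word_eq_wordAt] at hq
      obtain ⟨i, hi⟩ := h.exists_isMinIdx (q + 1)
      rw [hq, hP _ _ hi] at hw
      exact ⟨i, hw, ((h.wordAt_eq_iff_isMinIdx _ hi).2 (hm i hw)).trans hq.symm⟩
    · rintro ⟨i, hi, rfl⟩
      have hlen : (word α (m i) n).length = n := length_wordAt _ _ _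
      exact ⟨hlen, ⟨m i, by rw [hlen]⟩, (hP _ _ (hm i hi)).2 hi⟩
  rw [himg, Set.InjOn.ncard_image, Set.ncard_coe_finset]
  intro i hi i' hi' heq
  exact h.isMinIdx_unique (hm i hi) ((h.wordAt_eq_iff_isMinIdx _ (hm i' hi')).1 heq)

/-- The words in a sufficiently short prefix are those with a minimal index in a certain range. -/
theorem RotationCoding.occursIn_iff {α β : ℝ} {s A B C : ℤ} {n T : ℕ} {x y : ℝ} {g : ℤ → ℝ}
    (h : RotationCoding α β s A B C n x y g) (hT : (T : ℤ) + 2 = A + B) {p i : ℤ}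
    (hp : IsMinIdx g n p i) :
    OccursIn α (wordAt (v0 α) p n) T ↔ i < A ∧ n < i + B := by
  rw [OccursIn, length_wordAt]
  constructor
  · rintro ⟨m, hm, hw⟩
    rw [word_eq_wordAt, eq_comm, h.wordAt_eq_iff_isMinIdx _ hp] at hw
    have := h.isMinIdx_unique hw (h.isMinIdx_of_add_lt (by omega) (by omega))
    omega
  · rintro ⟨h1, h2⟩
    refine ⟨(A - i - 1).toNat, by omega, ?_⟩
    rw [word_eq_wordAt, eq_comm, h.wordAt_eq_iff_isMinIdx _ hp,
      show ((A - i - 1).toNat : ℤ) + 1 = A - i by omega]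
    have := h.isMinIdx_of_add_lt (p := A - i) (by omega) (by omega)
    rwa [sub_sub_cancel] at this

theorem RotationCoding.hasFreq_iff {α β : ℝ} {s A B C : ℤ} {n : ℕ} {x y : ℝ} {g : ℤ → ℝ}
    (h : RotationCoding α β s A B C n x y g) {v : ℤ → Bool} (hv : v ∈ hull α) {p i : ℤ}
    (hp : IsMinIdx g n p i) (L : ℝ) :
    HasFreq v (wordAt (v0 α) p n) L ↔ gapLen A B n x y i = L :=
  ⟨fun hL => tendsto_nhds_unique (h.hasFreq hv hp) hL, fun hL => hL ▸ h.hasFreq hv hp⟩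

/-- For `n = F_k + j` (`k ≥ 2`, `0 ≤ j ≤ F_{k-1} - 1`) and every `v ∈ Ω`,
every factor of `v₀` of length `n` has a frequency in `v`, belonging to
`{τ^{-(k-1)}, τ^{-k}, τ^{-(k+1)}}`; the frequency is `τ^{-(k-1)}` exactly for the
`F_{k-1} - j - 1` factors occurring in `(v₀(1), …, v₀(F_{k+1} - 2))`, and exactly
`F_{k-2} + j + 1` (resp. `j + 1`) factors have frequency `τ^{-k}` (resp. `τ^{-(k+1)}`). -/
theorem factor_frequency_fib (α τ : ℝ) (hα : α = (Real.sqrt 5 - 1) / 2)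
    (hτ : τ = (1 + Real.sqrt 5) / 2)
    (k j n : ℕ) (hk : 2 ≤ k) (hj : j ≤ F (k - 1) - 1) (hn : n = F k + j) :
    ∀ v ∈ hull α,
      (∀ w : List Bool, w.length = n → IsFactor α w →
          ∃ L : ℝ, HasFreq v w L ∧
            (L = (1 / τ) ^ (k - 1) ∨ L = (1 / τ) ^ k ∨ L = (1 / τ) ^ (k + 1))) ∧
      (∀ w : List Bool, w.length = n → IsFactor α w →
          (HasFreq v w ((1 / τ) ^ (k - 1)) ↔ OccursIn α w (F (k + 1) - 2))) ∧
      {w : List Bool | w.length = n ∧ IsFactor α w ∧ OccursIn α w (F (k + 1) - 2)}.ncard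
          = F (k - 1) - j - 1 ∧
      {w : List Bool | w.length = n ∧ IsFactor α w ∧ HasFreq v w ((1 / τ) ^ k)}.ncard
          = F (k - 2) + j + 1 ∧
      {w : List Bool | w.length = n ∧ IsFactor α w ∧ HasFreq v w ((1 / τ) ^ (k + 1))}.ncard
          = j + 1 := by
  intro v hv
  have h5 : Real.sqrt 5 ^ 2 = 5 := Real.sq_sqrt (by norm_num)
  have h5lo : 2 < Real.sqrt 5 := by rw [Real.lt_sqrt] <;> norm_num
  have h5hi : Real.sqrt 5 < 3 := by rw [Real.sqrt_lt'] <;> norm_num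
  have hτα : 1 / τ = α := by
    rw [hα, hτ]
    field_simp
    linarith
  have h0 : 0 < α := by linarith
  have h1 : α < 1 := by linarith
  have hsq : α ^ 2 = 1 - α := by rw [hα]; linarith
  have hirr : Irrational α := by
    have e : α = Real.goldenRatio - (1 : ℤ) := by
      rw [hα, Real.goldenRatio]; push_cast; ring
    rw [e]
    exact Real.goldenRatio_irrational.sub_intCast 1
  obtain ⟨r, rfl⟩ := Nat.exists_eq_add_of_le' hk
  have hFk1 : F (r + 2 - 1) = Nat.fib (r + 2) := rfl
  have hFk : F (r + 2) = Nat.fib (r + 3) := rfl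
  have hFk2 : F (r + 2 - 2) = Nat.fib (r + 1) := rfl
  have hFk3 : F (r + 2 + 1) = Nat.fib (r + 2) + Nat.fib (r + 3) := Nat.fib_add_two
  have hfib : Nat.fib (r + 3) = Nat.fib (r + 1) + Nat.fib (r + 2) := Nat.fib_add_two
  have hBpos : 0 < Nat.fib (r + 2) := Nat.fib_pos.2 (by omega)
  have hCpos : 0 < Nat.fib (r + 1) := Nat.fib_pos.2 (by omega)
  rw [hFk1] at hj
  rw [hFk] at hn
  rw [hτα, hFk1, hFk2, hFk3, show r + 2 - 1 = r + 1 from rfl]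
  obtain ⟨β, s, g, h⟩ := exists_rotationCoding h0 h1 hsq hirr r n (by omega) (by omega)
  have hx := h.x_pos
  have hxy := h.x_lt_y
  have hpow : α ^ (r + 1) = α ^ (r + 3) + α ^ (r + 2) := by
    linear_combination (-α ^ (r + 1)) * hsq
  have hT : ((Nat.fib (r + 2) + Nat.fib (r + 3) - 2 : ℕ) : ℤ) + 2 =
      Nat.fib (r + 3) + Nat.fib (r + 2) := by omega
  have hocc := fun p i (hp : IsMinIdx g n p i) => h.occursIn_iff hT hp
  have hfactor : ∀ w : List Bool, w.length = n → IsFactor α w →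
      ∃ p i, w = wordAt (v0 α) p n ∧ IsMinIdx g n p i := by
    rintro w hlen ⟨q, hq⟩
    obtain ⟨i, hi⟩ := h.exists_isMinIdx (q + 1)
    exact ⟨q + 1, i, by rw [hq, hlen, word_eq_wordAt], hi⟩
  refine ⟨fun w hlen hw => ?_, fun w hlen hw => ?_, ?_, ?_, ?_⟩
  · obtain ⟨p, i, rfl, hp⟩ := hfactor w hlen hw
    refine ⟨_, h.hasFreq hv hp, ?_⟩
    unfold gapLen
    split_ifs <;> simp [hpow]
  · obtain ⟨p, i, rfl, hp⟩ := hfactor w hlen hw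
    rw [h.hasFreq_iff hv hp, hocc p i hp, gapLen, hpow]
    split_ifs
    · exact iff_of_false (by linarith) (by omega)
    · exact iff_of_false (by linarith) (by omega)
    · exact iff_of_true rfl (by omega)
  · rw [h.ncard_factors _ (Finset.Ico (Nat.fib (r + 1) + j + 1) (Nat.fib (r + 3)))]
    · rw [Int.card_Ico]
      omega
    · intro i hi
      rw [Finset.mem_Ico] at hi
      omega
    · intro p i hp
      rw [hocc p i hp, Finset.mem_Ico]
      omega
  · rw [h.ncard_factors _ (Finset.Ico 0 (Nat.fib (r + 1) + j + 1))]
    · rw [Int.card_Ico]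
      omega
    · intro i hi
      rw [Finset.mem_Ico] at hi
      omega
    · intro p i hp
      have := hp.1
      rw [h.hasFreq_iff hv hp, gapLen, Finset.mem_Ico]
      split_ifs
      · exact iff_of_false (by linarith) (by omega)
      · exact iff_of_true rfl (by omega)
      · exact iff_of_false (by linarith) (by omega)
  · rw [h.ncard_factors _ (Finset.Icc (Nat.fib (r + 3)) n)]
    · rw [Int.card_Icc]
      omega
    · intro i hi
      rw [Finset.mem_Icc] at hi
      omega
    · intro p i hp
      have := hp.2.1
      rw [h.hasFreq_iff hv hp, gapLen, Finset.mem_Icc]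
      split_ifs
      · exact iff_of_true rfl (by omega)
      · exact iff_of_false (by linarith) (by omega)
      · exact iff_of_false (by linarith) (by omega)

end
end
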